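/- Let V : ℝ → ℝ be Borel measurable, locally integrable and nonnegative almost everywhere, and fix x₀ ∈ ℝ. Then the map R ↦ λ_V([x₀ − R, x₀ + R]) is monotonically nonincreasing and lower semicontinuous on (0, ∞), with λ_V([x₀ − R, x₀ + R]) < ∞ for every R > 0; moreover λ_V([x₀ − R, x₀ + R]) → +∞ as R → 0⁺, and inf_{R>0} λ_V([x₀ − R, x₀ + R]) = lim_{R→∞} λ_V([x₀ − R, x₀ + R]) = λ_V(ℝ). (This is the paper's Lemma 3.2 for the metric graph G = H = ℝ, where B_R(x₀) = [x₀ − R, x₀ + R].) -/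

import Mathlib

open MeasureTheory Set Filter Topology
open scoped ENNReal

/-- Rayleigh quotient of a test function `f` for the Schrödinger form with potential `V`. -/
noncomputable def rayleigh (V : ℝ → ℝ) (f : ℝ → ℝ) : ℝ :=
  (∫ x, ((deriv f x) ^ 2 + V x * (f x) ^ 2)) / (∫ x, (f x) ^ 2)

/-- `f` is an admissible test function for the closed set `S`: continuously differentiable,
not identically zero, with compact support contained in `S`. -/
def TestFor (S : Set ℝ) (f : ℝ → ℝ) : Prop :=
  ContDiff ℝ 1 f ∧ f ≠ 0 ∧ HasCompactSupport f ∧ tsupport f ⊆ S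

/-- Dirichlet ground state energy `λ_V(S)`, with `sInf ∅ = ∞`. -/
noncomputable def lambdaV (V : ℝ → ℝ) (S : Set ℝ) : ℝ≥0∞ :=
  sInf {e : ℝ≥0∞ | ∃ f : ℝ → ℝ, TestFor S f ∧ e = ENNReal.ofReal (rayleigh V f)}

/-- `Σ_V`, the infimum of the essential spectrum of `-d²/dx² + V` on `ℝ`, characterized
Persson-style as `sup_{R>0} λ_V({|x| ≥ R})`. -/
noncomputable def SigmaV (V : ℝ → ℝ) : ℝ≥0∞ :=
  ⨆ R : ℝ, ⨆ _ : 0 < R, lambdaV V {x : ℝ | R ≤ |x|}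

/-- A `k`-partition of `ℝ`: `k` closed connected subsets with nonempty interior whose
pairwise intersections are contained in both frontiers. -/
def IsPartitionR (k : ℕ) (G : Fin k → Set ℝ) : Prop :=
  (∀ i, IsClosed (G i)) ∧ (∀ i, IsConnected (G i)) ∧
    (∀ i, (interior (G i)).Nonempty) ∧
    ∀ i j, i ≠ j → G i ∩ G j ⊆ frontier (G i) ∩ frontier (G j)

/-- The energy `Δ(P)` of a partition: the maximum of the ground state energies. -/
noncomputable def energyR (V : ℝ → ℝ) {k : ℕ} (G : Fin k → Set ℝ) : ℝ≥0∞ :=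
  ⨆ i, lambdaV V (G i)

/-- The infimal `k`-partition energy `Δ*_k(ℝ)`. -/
noncomputable def optEnergyR (V : ℝ → ℝ) (k : ℕ) : ℝ≥0∞ :=
  ⨅ G : {G : Fin k → Set ℝ // IsPartitionR k G}, energyR V G.1

/-!
Everything except continuity is immediate from domain monotonicity, the Poincaré inequality on
short intervals and the compact supports of test functions. For continuity, contract a test
function `f` on the ball of radius `R` to `x ↦ f (x₀ + s (x - x₀))`, a test function on the ball of
radius `R / s`. The kinetic energy and the norm scale exactly. The potential is only locally
integrable and cannot be rescaled, but `‖f'‖₂` controls both `sup |f|` and the `1/2`-Hölder constant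
of `f`, so the potential energy changes by at most `O(√(s - 1)) ‖f'‖₂²`. Since `V ≥ 0`, the
Rayleigh quotient therefore grows at most by a factor tending to `1` as `s → 1`.
-/

theorem sq_integral_le_measureReal_univ_mul_integral_sq {α : Type*} [MeasurableSpace α]
    {μ : Measure α} [IsFiniteMeasure μ] {f : α → ℝ} (hf : MemLp f 2 μ) :
    (∫ x, f x ∂μ) ^ 2 ≤ μ.real univ * ∫ x, f x ^ 2 ∂μ := by
  rcases eq_or_ne μ 0 with rfl | hμ
  · simp
  have : NeZero μ := ⟨hμ⟩
  have hjensen : (⨍ x, f x ∂μ) ^ 2 ≤ ⨍ x, f x ^ 2 ∂μ :=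
    even_two.convexOn_pow.map_average_le (continuous_pow 2).continuousOn isClosed_univ
      (by simp) (hf.integrable one_le_two) hf.integrable_sq
  have hmass : 0 < μ.real univ := measureReal_univ_pos
  rw [average_eq, average_eq, smul_eq_mul, smul_eq_mul, mul_pow, inv_pow,
    inv_mul_le_iff₀ (by positivity)] at hjensen
  calc (∫ x, f x ∂μ) ^ 2
      ≤ μ.real univ ^ 2 * ((μ.real univ)⁻¹ * ∫ x, f x ^ 2 ∂μ) := hjensen
    _ = μ.real univ * ∫ x, f x ^ 2 ∂μ := by field_simp

theorem sq_sub_le_abs_sub_mul_integral_deriv_sq {f : ℝ → ℝ} (hf : ContDiff ℝ 1 f)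
    (hf' : MemLp (deriv f) 2) (x y : ℝ) :
    (f y - f x) ^ 2 ≤ |y - x| * ∫ t, deriv f t ^ 2 := by
  have hftc : ∫ t in x..y, deriv f t = f y - f x :=
    intervalIntegral.integral_deriv_eq_sub (fun t _ ↦ hf.differentiable one_ne_zero t)
      ((hf.continuous_deriv le_rfl).intervalIntegrable x y)
  have : IsFiniteMeasure (volume.restrict (uIoc x y)) := ⟨by simp [Real.volume_uIoc]⟩
  calc (f y - f x) ^ 2
      = (∫ t in uIoc x y, deriv f t) ^ 2 := by
        rw [← hftc, ← sq_abs, intervalIntegral.abs_integral_eq_abs_integral_uIoc, sq_abs]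
    _ ≤ |y - x| * ∫ t in uIoc x y, deriv f t ^ 2 := by
        simpa [measureReal_def, Real.volume_uIoc] using
          sq_integral_le_measureReal_univ_mul_integral_sq (hf'.restrict (uIoc x y))
    _ ≤ |y - x| * ∫ t, deriv f t ^ 2 := by
        exact mul_le_mul_of_nonneg_left (setIntegral_le_integral hf'.integrable_sq
          (ae_of_all _ fun t ↦ sq_nonneg _)) (abs_nonneg _)

theorem integral_comp_homothety {E : Type*} [NormedAddCommGroup E] [NormedSpace ℝ E]
    (F : ℝ → E) (c s : ℝ) :
    ∫ x, F (AffineMap.homothety c s x) = |s⁻¹| • ∫ x, F x := by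
  simp only [AffineMap.homothety_apply, vsub_eq_sub, smul_eq_mul, vadd_eq_add]
  rw [integral_sub_right_eq_self (fun y ↦ F (s * y + c)) c,
    Measure.integral_comp_mul_left (fun y ↦ F (y + c)), integral_add_right_eq_self]

theorem deriv_comp_homothety {E : Type*} [NormedAddCommGroup E] [NormedSpace ℝ E]
    (f : ℝ → E) (c s x : ℝ) :
    deriv (f ∘ AffineMap.homothety c s) x = s • deriv f (AffineMap.homothety c s x) := by
  have hcomp : f ∘ AffineMap.homothety c s = fun x ↦ (fun y ↦ f (s * y + c)) (x - c) := by
    ext x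
    simp [AffineMap.homothety_apply]
  rw [hcomp, deriv_comp_sub_const (f := fun y ↦ f (s * y + c)),
    deriv_comp_mul_left s (fun y ↦ f (y + c)), deriv_comp_add_const]
  simp [AffineMap.homothety_apply]

theorem integral_deriv_sq_comp_homothety (f : ℝ → ℝ) (c s : ℝ) :
    ∫ x, deriv (f ∘ AffineMap.homothety c s) x ^ 2 = |s| * ∫ x, deriv f x ^ 2 := by
  have hscale : s ^ 2 * |s⁻¹| = |s| := by
    rcases eq_or_ne s 0 with rfl | hs
    · simp
    · rw [abs_inv, ← sq_abs]
      field_simp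
  simp only [deriv_comp_homothety, smul_eq_mul, mul_pow, integral_const_mul]
  rw [integral_comp_homothety (fun x ↦ deriv f x ^ 2), smul_eq_mul, ← mul_assoc, hscale]

namespace TestFor

variable {S : Set ℝ} {f : ℝ → ℝ}

theorem contDiff (hf : TestFor S f) : ContDiff ℝ 1 f := hf.1

theorem ne_zero (hf : TestFor S f) : f ≠ 0 := hf.2.1

theorem hasCompactSupport (hf : TestFor S f) : HasCompactSupport f := hf.2.2.1

theorem tsupport_subset (hf : TestFor S f) : tsupport f ⊆ S := hf.2.2.2

theorem mono {T : Set ℝ} (hf : TestFor S f) (hST : S ⊆ T) : TestFor T f :=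
  ⟨hf.contDiff, hf.ne_zero, hf.hasCompactSupport, hf.tsupport_subset.trans hST⟩

theorem eq_zero_of_notMem (hf : TestFor S f) {x : ℝ} (hx : x ∉ S) : f x = 0 :=
  image_eq_zero_of_notMem_tsupport fun hx' ↦ hx (hf.tsupport_subset hx')

theorem hasCompactSupport_sq (hf : TestFor S f) : HasCompactSupport fun x ↦ f x ^ 2 :=
  hf.hasCompactSupport.comp_left (g := fun y : ℝ ↦ y ^ 2) (zero_pow two_ne_zero)

theorem memLp_deriv (hf : TestFor S f) : MemLp (deriv f) 2 :=
  (hf.contDiff.continuous_deriv le_rfl).memLp_of_hasCompactSupport hf.hasCompactSupport.deriv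

theorem integral_sq_pos (hf : TestFor S f) : 0 < ∫ x, f x ^ 2 := by
  obtain ⟨x, hx⟩ := Function.ne_iff.1 hf.ne_zero
  exact (hf.contDiff.continuous.pow 2).integral_pos_of_hasCompactSupport_nonneg_nonzero
    hf.hasCompactSupport_sq (fun _ ↦ sq_nonneg _) (pow_ne_zero 2 hx)

theorem integrable_mul_sq {V : ℝ → ℝ} (hf : TestFor S f) (hloc : LocallyIntegrable V) :
    Integrable fun x ↦ V x * f x ^ 2 :=
  hloc.integrable_smul_right_of_hasCompactSupport (hf.contDiff.continuous.pow 2)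
    hf.hasCompactSupport_sq

theorem integral_form_eq {V : ℝ → ℝ} (hf : TestFor S f) (hloc : LocallyIntegrable V) :
    ∫ x, (deriv f x ^ 2 + V x * f x ^ 2) = (∫ x, deriv f x ^ 2) + ∫ x, V x * f x ^ 2 :=
  integral_add hf.memLp_deriv.integrable_sq (hf.integrable_mul_sq hloc)

theorem integral_deriv_sq_le {V : ℝ → ℝ} (hf : TestFor S f) (hloc : LocallyIntegrable V)
    (hpos : ∀ᵐ x, 0 ≤ V x) :
    ∫ x, deriv f x ^ 2 ≤ ∫ x, (deriv f x ^ 2 + V x * f x ^ 2) := by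
  rw [hf.integral_form_eq hloc]
  exact le_add_of_nonneg_right <| integral_nonneg_of_ae <|
    hpos.mono fun x hx ↦ mul_nonneg hx (sq_nonneg _)

theorem comp_homothety {c R s : ℝ} (hf : TestFor (Metric.closedBall c R) f) (hs : 0 < s) :
    TestFor (Metric.closedBall c (R / s)) (f ∘ AffineMap.homothety c s) := by
  have hsmooth : ContDiff ℝ 1 (AffineMap.homothety c s) := by
    simp only [AffineMap.coe_homothety, vsub_eq_sub, vadd_eq_add]
    fun_prop
  have hsupp : tsupport (f ∘ AffineMap.homothety c s) ⊆ Metric.closedBall c (R / s) := by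
    intro x hx
    have hx' : AffineMap.homothety c s x ∈ Metric.closedBall c R :=
      hf.tsupport_subset (tsupport_comp_subset_preimage f hsmooth.continuous hx)
    rwa [Metric.mem_closedBall, dist_homothety_center, Real.norm_of_nonneg hs.le, dist_comm,
      ← le_div_iff₀' hs] at hx'
  have hne : f ∘ AffineMap.homothety c s ≠ 0 := by
    obtain ⟨x, hx⟩ := Function.ne_iff.1 hf.ne_zero
    refine Function.ne_iff.2 ⟨AffineMap.homothety c s⁻¹ x, ?_⟩
    rwa [Function.comp_apply, ← AffineMap.homothety_mul_apply, mul_inv_cancel₀ hs.ne',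
      AffineMap.homothety_one]
  exact ⟨hf.contDiff.comp hsmooth, hne,
    (isCompact_closedBall c _).of_isClosed_subset (isClosed_tsupport _) hsupp, hsupp⟩

theorem sq_le {c R : ℝ} (hf : TestFor (Metric.closedBall c R) f) (hR : 0 < R) (x : ℝ) :
    f x ^ 2 ≤ 4 * R * ∫ t, deriv f t ^ 2 := by
  by_cases hx : x ∈ Metric.closedBall c R
  · have hzero : f (x - 4 * R) = 0 := hf.eq_zero_of_notMem fun hx' ↦ by
      rw [Real.closedBall_eq_Icc] at hx hx'
      linarith [hx.2, hx'.1]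
    simpa [hzero, abs_of_pos hR] using
      sq_sub_le_abs_sub_mul_integral_deriv_sq hf.contDiff hf.memLp_deriv (x - 4 * R) x
  · rw [hf.eq_zero_of_notMem hx]
    simpa using mul_nonneg (by positivity : 0 ≤ 4 * R)
      (integral_nonneg fun t ↦ sq_nonneg (deriv f t))

theorem integral_sq_le {c R : ℝ} (hf : TestFor (Metric.closedBall c R) f) (hR : 0 < R) :
    ∫ x, f x ^ 2 ≤ 8 * R ^ 2 * ∫ x, deriv f x ^ 2 := by
  have hrestrict : ∫ x in Metric.closedBall c R, f x ^ 2 = ∫ x, f x ^ 2 :=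
    setIntegral_eq_integral_of_forall_compl_eq_zero fun x hx ↦ by simp [hf.eq_zero_of_notMem hx]
  calc ∫ x, f x ^ 2 = ∫ x in Metric.closedBall c R, f x ^ 2 := hrestrict.symm
    _ ≤ ∫ _x in Metric.closedBall c R, 4 * R * ∫ t, deriv f t ^ 2 := by
        refine integral_mono ?_ ?_ fun x ↦ hf.sq_le hR x
        · exact ((hf.contDiff.continuous.pow 2).integrable_of_hasCompactSupport
            hf.hasCompactSupport_sq).integrableOn
        · exact integrableOn_const measure_closedBall_lt_top.ne
    _ = 8 * R ^ 2 * ∫ x, deriv f x ^ 2 := by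
        rw [setIntegral_const, Real.volume_real_closedBall hR.le, smul_eq_mul]
        ring

theorem inv_eight_mul_sq_le_rayleigh {V : ℝ → ℝ} (hloc : LocallyIntegrable V) (hpos : ∀ᵐ x, 0 ≤ V x)
    {c R : ℝ} (hf : TestFor (Metric.closedBall c R) f) (hR : 0 < R) :
    (8 * R ^ 2)⁻¹ ≤ rayleigh V f := by
  rw [rayleigh, inv_eq_one_div, div_le_div_iff₀ (by positivity) hf.integral_sq_pos, one_mul,
    mul_comm]
  exact (hf.integral_sq_le hR).trans
    (mul_le_mul_of_nonneg_left (hf.integral_deriv_sq_le hloc hpos) (by positivity))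

theorem sq_comp_homothety_sub_sq_le {c R s : ℝ} (hf : TestFor (Metric.closedBall c R) f)
    (hR : 0 < R) (hs : 1 ≤ s) {x : ℝ} (hx : x ∈ Metric.closedBall c R) :
    f (AffineMap.homothety c s x) ^ 2 - f x ^ 2 ≤ 4 * R * √(s - 1) * ∫ t, deriv f t ^ 2 := by
  set y := AffineMap.homothety c s x
  set D := ∫ t, deriv f t ^ 2
  have hs' : 0 ≤ s - 1 := sub_nonneg.2 hs
  have : 0 ≤ D := integral_nonneg fun t ↦ sq_nonneg _
  have hdist : |y - x| ≤ (s - 1) * R := by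
    rw [← Real.dist_eq, dist_homothety_self, norm_sub_rev, Real.norm_of_nonneg hs', dist_comm]
    gcongr
    exact hx
  have hsub : (f y - f x) ^ 2 ≤ (s - 1) * R * D :=
    (sq_sub_le_abs_sub_mul_integral_deriv_sq hf.contDiff hf.memLp_deriv x y).trans (by gcongr)
  have hadd : (f y + f x) ^ 2 ≤ 16 * R * D := by
    nlinarith [sq_nonneg (f y - f x), hf.sq_le hR x, hf.sq_le hR y]
  refine (le_abs_self _).trans (abs_le_of_sq_le_sq ?_ (by positivity))
  calc (f y ^ 2 - f x ^ 2) ^ 2 = (f y - f x) ^ 2 * (f y + f x) ^ 2 := by ring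
    _ ≤ (s - 1) * R * D * (16 * R * D) := by gcongr
    _ = (4 * R * √(s - 1) * D) ^ 2 := by
        rw [mul_pow, mul_pow, mul_pow, Real.sq_sqrt hs']
        ring

theorem integral_mul_sq_comp_homothety_le {V : ℝ → ℝ} (hloc : LocallyIntegrable V)
    (hpos : ∀ᵐ x, 0 ≤ V x) {c R s : ℝ} (hf : TestFor (Metric.closedBall c R) f) (hR : 0 < R)
    (hs : 1 ≤ s) :
    ∫ x, V x * (f ∘ AffineMap.homothety c s) x ^ 2 ≤
      (∫ x, V x * f x ^ 2) +
        4 * R * √(s - 1) * (∫ x in Metric.closedBall c R, V x) * ∫ x, deriv f x ^ 2 := by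
  set g := f ∘ AffineMap.homothety c s
  set D := ∫ x, deriv f x ^ 2
  have hg : TestFor (Metric.closedBall c R) g :=
    (hf.comp_homothety (by positivity)).mono
      (Metric.closedBall_subset_closedBall (div_le_self hR.le hs))
  have hf_int := hf.integrable_mul_sq hloc
  have hg_int := hg.integrable_mul_sq hloc
  have hdiff : ∫ x in Metric.closedBall c R, (V x * g x ^ 2 - V x * f x ^ 2) ≤
      ∫ x in Metric.closedBall c R, V x * (4 * R * √(s - 1) * D) := by
    refine setIntegral_mono_on_ae (hg_int.sub hf_int).integrableOn
      ((hloc.integrableOn_isCompact (isCompact_closedBall c R)).mul_const _)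
      Metric.isClosed_closedBall.measurableSet ?_
    filter_upwards [hpos] with x hVx hx
    rw [← mul_sub]
    exact mul_le_mul_of_nonneg_left (hf.sq_comp_homothety_sub_sq_le hR hs hx) hVx
  rw [setIntegral_eq_integral_of_forall_compl_eq_zero fun x hx ↦ by
    simp [hf.eq_zero_of_notMem hx, hg.eq_zero_of_notMem hx], integral_sub hg_int hf_int,
    integral_mul_const] at hdiff
  linarith

theorem integral_form_comp_homothety_le {V : ℝ → ℝ} (hloc : LocallyIntegrable V)
    (hpos : ∀ᵐ x, 0 ≤ V x) {c R s : ℝ} (hf : TestFor (Metric.closedBall c R) f) (hR : 0 < R)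
    (hs : 1 ≤ s) :
    ∫ x, (deriv (f ∘ AffineMap.homothety c s) x ^ 2 +
        V x * (f ∘ AffineMap.homothety c s) x ^ 2) ≤
      (s + 4 * R * √(s - 1) * ∫ x in Metric.closedBall c R, V x) *
        ∫ x, (deriv f x ^ 2 + V x * f x ^ 2) := by
  set W := ∫ x in Metric.closedBall c R, V x
  set P := ∫ x, V x * f x ^ 2
  have hs₀ : 0 < s := by positivity
  have hW : 0 ≤ 4 * R * √(s - 1) * W :=
    mul_nonneg (by positivity) (setIntegral_nonneg_of_ae hpos)
  have hP : P ≤ s * P := le_mul_of_one_le_left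
    (integral_nonneg_of_ae <| hpos.mono fun x hx ↦ mul_nonneg hx (sq_nonneg _)) hs
  have hpot := hf.integral_mul_sq_comp_homothety_le hloc hpos hR hs
  have hkin := mul_le_mul_of_nonneg_left (hf.integral_deriv_sq_le hloc hpos) hW
  rw [(hf.comp_homothety hs₀).integral_form_eq hloc, integral_deriv_sq_comp_homothety,
    abs_of_pos hs₀]
  linear_combination hpot + hkin + hP - s * hf.integral_form_eq hloc

end TestFor

/-- The factor by which contracting a test function by `s ≥ 1` towards the centre of its ball may
enlarge the Rayleigh quotient; `R` is the radius of the ball and `W` the integral of the potential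
over it. -/
noncomputable def contractionFactor (R W s : ℝ) : ℝ :=
  s * (s + 4 * R * √(s - 1) * W)

theorem tendsto_ofReal_contractionFactor {α : Type*} {l : Filter α} {u : α → ℝ} (R W : ℝ)
    (hu : Tendsto u l (𝓝 1)) :
    Tendsto (fun a ↦ ENNReal.ofReal (contractionFactor R W (u a))) l (𝓝 1) := by
  have hcont : Continuous (contractionFactor R W) := by
    unfold contractionFactor
    fun_prop
  rw [← ENNReal.ofReal_one]
  exact ENNReal.tendsto_ofReal ((hcont.tendsto' 1 1 (by simp [contractionFactor])).comp hu)

theorem contractionFactor_pos {R W s : ℝ} (hR : 0 ≤ R) (hW : 0 ≤ W) (hs : 0 < s) :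
    0 < contractionFactor R W s := by
  unfold contractionFactor
  positivity

theorem TestFor.rayleigh_comp_homothety_le {V f : ℝ → ℝ} (hloc : LocallyIntegrable V)
    (hpos : ∀ᵐ x, 0 ≤ V x) {c R s : ℝ} (hf : TestFor (Metric.closedBall c R) f) (hR : 0 < R)
    (hs : 1 ≤ s) :
    rayleigh V (f ∘ AffineMap.homothety c s) ≤
      contractionFactor R (∫ x in Metric.closedBall c R, V x) s * rayleigh V f := by
  have hs₀ : 0 < s := by positivity
  have hnorm : ∫ x, (f ∘ AffineMap.homothety c s) x ^ 2 = s⁻¹ * ∫ x, f x ^ 2 := by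
    simpa [abs_of_pos hs₀] using integral_comp_homothety (fun x ↦ f x ^ 2) c s
  have hN := hf.integral_sq_pos
  rw [rayleigh, rayleigh, hnorm, div_le_iff₀ (by positivity)]
  refine (hf.integral_form_comp_homothety_le hloc hpos hR hs).trans_eq ?_
  rw [contractionFactor]
  field_simp

theorem le_lambdaV_iff {V : ℝ → ℝ} {S : Set ℝ} {e : ℝ≥0∞} :
    e ≤ lambdaV V S ↔ ∀ f, TestFor S f → e ≤ ENNReal.ofReal (rayleigh V f) := by
  simp only [lambdaV, le_sInf_iff, mem_ofPred_eq, forall_exists_index, and_imp]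
  exact ⟨fun h f hf ↦ h _ f hf rfl, fun h _ f hf he ↦ he ▸ h f hf⟩

theorem TestFor.lambdaV_le {V f : ℝ → ℝ} {S : Set ℝ} (hf : TestFor S f) :
    lambdaV V S ≤ ENNReal.ofReal (rayleigh V f) :=
  le_lambdaV_iff.1 le_rfl f hf

theorem lambdaV_antitone (V : ℝ → ℝ) : Antitone (lambdaV V) := fun _ _ hST ↦
  le_lambdaV_iff.2 fun _ hf ↦ (hf.mono hST).lambdaV_le

theorem lambdaV_closedBall_antitone (V : ℝ → ℝ) (c : ℝ) :
    Antitone fun R ↦ lambdaV V (Metric.closedBall c R) := fun _ _ hR ↦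
  lambdaV_antitone V (Metric.closedBall_subset_closedBall hR)

theorem lambdaV_ne_top_of_mem_nhds (V : ℝ → ℝ) {S : Set ℝ} {x : ℝ} (hS : S ∈ 𝓝 x) :
    lambdaV V S ≠ ⊤ := by
  obtain ⟨f, hfS, hfc, hf, -, hfx⟩ := exists_contDiff_tsupport_subset (n := 1) hS
  have hf₀ : f ≠ 0 := Function.ne_iff.2 ⟨x, by simp [hfx]⟩
  exact ne_top_of_le_ne_top ENNReal.ofReal_ne_top
    (TestFor.lambdaV_le ⟨hf, hf₀, hfc, hfS⟩)

theorem iInf_lambdaV_eq_lambdaV_univ (V : ℝ → ℝ) {ι : Sort*} {K : ι → Set ℝ}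
    (hK : ∀ C, IsCompact C → ∃ i, C ⊆ K i) : ⨅ i, lambdaV V (K i) = lambdaV V univ := by
  refine le_antisymm (le_lambdaV_iff.2 fun f hf ↦ ?_)
    (le_iInf fun i ↦ lambdaV_antitone V (subset_univ _))
  obtain ⟨i, hi⟩ := hK (tsupport f) hf.hasCompactSupport
  exact (iInf_le _ i).trans (TestFor.lambdaV_le ⟨hf.contDiff, hf.ne_zero, hf.hasCompactSupport, hi⟩)

theorem tendsto_lambdaV_closedBall_atTop (V : ℝ → ℝ) (c : ℝ) :
    Tendsto (fun R ↦ lambdaV V (Metric.closedBall c R)) atTop (𝓝 (lambdaV V univ)) := by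
  rw [← iInf_lambdaV_eq_lambdaV_univ V fun C (hC : IsCompact C) ↦ hC.isBounded.subset_closedBall c]
  exact tendsto_atTop_iInf (lambdaV_closedBall_antitone V c)

theorem iInf_pos_lambdaV_closedBall (V : ℝ → ℝ) (c : ℝ) :
    ⨅ R : {R : ℝ // 0 < R}, lambdaV V (Metric.closedBall c R) = lambdaV V univ :=
  iInf_lambdaV_eq_lambdaV_univ V fun _ hC ↦
    let ⟨R, hR, hCR⟩ := hC.isBounded.subset_closedBall_lt 0 c
    ⟨⟨R, hR⟩, hCR⟩

theorem tendsto_lambdaV_closedBall_nhdsGT_zero {V : ℝ → ℝ} (hloc : LocallyIntegrable V)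
    (hpos : ∀ᵐ x, 0 ≤ V x) (c : ℝ) :
    Tendsto (fun R ↦ lambdaV V (Metric.closedBall c R)) (𝓝[>] 0) (𝓝 ⊤) := by
  have hsq : Tendsto (fun R : ℝ ↦ 8 * R ^ 2) (𝓝[>] 0) (𝓝[>] 0) := by
    refine tendsto_nhdsWithin_iff.2 ⟨?_, ?_⟩
    · exact ((by fun_prop : Continuous fun R : ℝ ↦ 8 * R ^ 2).tendsto' 0 0 (by simp)).mono_left
        nhdsWithin_le_nhds
    · filter_upwards [self_mem_nhdsWithin] with R (hR : 0 < R)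
      exact mem_Ioi.2 (by positivity)
  refine tendsto_nhds_top_mono (ENNReal.tendsto_ofReal_atTop.comp hsq.inv_tendsto_nhdsGT_zero) ?_
  filter_upwards [self_mem_nhdsWithin] with R hR
  exact le_lambdaV_iff.2 fun f hf ↦
    ENNReal.ofReal_le_ofReal (hf.inv_eight_mul_sq_le_rayleigh hloc hpos hR)

theorem lambdaV_closedBall_le_contractionFactor_mul {V : ℝ → ℝ}
    (hloc : LocallyIntegrable V) (hpos : ∀ᵐ x, 0 ≤ V x) {c r R T : ℝ} (hr : 0 < r)
    (hrR : r ≤ R) (hRT : R ≤ T) :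
    lambdaV V (Metric.closedBall c r) ≤
      ENNReal.ofReal (contractionFactor T (∫ x in Metric.closedBall c T, V x) (R / r)) *
        lambdaV V (Metric.closedBall c R) := by
  have hR : 0 < R := hr.trans_le hrR
  have hT : 0 < T := hR.trans_le hRT
  set k := contractionFactor T (∫ x in Metric.closedBall c T, V x) (R / r)
  have hk : 0 < k :=
    contractionFactor_pos hT.le (setIntegral_nonneg_of_ae hpos) (div_pos hR hr)
  rw [← ENNReal.inv_mul_le_iff (ENNReal.ofReal_pos.2 hk).ne' ENNReal.ofReal_ne_top, le_lambdaV_iff]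
  intro f hf
  rw [ENNReal.inv_mul_le_iff (ENNReal.ofReal_pos.2 hk).ne' ENNReal.ofReal_ne_top,
    ← ENNReal.ofReal_mul hk.le]
  have hg := hf.comp_homothety (div_pos hR hr)
  rw [div_div_cancel₀ hR.ne'] at hg
  exact hg.lambdaV_le.trans <| ENNReal.ofReal_le_ofReal <|
    (hf.mono (Metric.closedBall_subset_closedBall hRT)).rayleigh_comp_homothety_le hloc hpos hT
      ((one_le_div hr).2 hrR)

theorem continuousWithinAt_lambdaV_closedBall_Ici {V : ℝ → ℝ} (hloc : LocallyIntegrable V)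
    (hpos : ∀ᵐ x, 0 ≤ V x) (c : ℝ) {R : ℝ} (hR : 0 < R) :
    ContinuousWithinAt (fun R ↦ lambdaV V (Metric.closedBall c R)) (Ici R) R := by
  set k := fun r ↦ ENNReal.ofReal
    (contractionFactor (R + 1) (∫ x in Metric.closedBall c (R + 1), V x) (r / R))
  have hk : Tendsto k (𝓝[≥] R) (𝓝 1) :=
    tendsto_ofReal_contractionFactor _ _ <|
      ((continuous_id.div_const R).tendsto' R 1 (div_self hR.ne')).mono_left nhdsWithin_le_nhds
  have hlower : Tendsto (fun r ↦ lambdaV V (Metric.closedBall c R) / k r) (𝓝[≥] R)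
      (𝓝 (lambdaV V (Metric.closedBall c R))) := by
    simpa using ENNReal.Tendsto.const_div hk (Or.inl ENNReal.one_ne_top)
  refine tendsto_of_tendsto_of_tendsto_of_le_of_le' hlower tendsto_const_nhds ?_ ?_
  · filter_upwards [Icc_mem_nhdsGE (lt_add_one R)] with r hr
    exact ENNReal.div_le_of_le_mul'
      (lambdaV_closedBall_le_contractionFactor_mul hloc hpos hR hr.1 hr.2)
  · filter_upwards [self_mem_nhdsWithin] with r hr using lambdaV_closedBall_antitone V c hr

theorem continuousWithinAt_lambdaV_closedBall_Iic {V : ℝ → ℝ} (hloc : LocallyIntegrable V)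
    (hpos : ∀ᵐ x, 0 ≤ V x) (c : ℝ) {R : ℝ} (hR : 0 < R) :
    ContinuousWithinAt (fun R ↦ lambdaV V (Metric.closedBall c R)) (Iic R) R := by
  set k := fun r ↦ ENNReal.ofReal
    (contractionFactor R (∫ x in Metric.closedBall c R, V x) (R / r))
  have hratio : ContinuousAt (fun r ↦ R / r) R := continuousAt_const.div continuousAt_id hR.ne'
  have hk : Tendsto k (𝓝[≤] R) (𝓝 1) :=
    tendsto_ofReal_contractionFactor _ _ <|
      (div_self hR.ne' ▸ hratio.tendsto).mono_left nhdsWithin_le_nhds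
  have hupper : Tendsto (fun r ↦ k r * lambdaV V (Metric.closedBall c R)) (𝓝[≤] R)
      (𝓝 (lambdaV V (Metric.closedBall c R))) := by
    simpa using ENNReal.Tendsto.mul_const hk (Or.inl one_ne_zero)
  refine tendsto_of_tendsto_of_tendsto_of_le_of_le' tendsto_const_nhds hupper ?_ ?_
  · filter_upwards [self_mem_nhdsWithin] with r hr using lambdaV_closedBall_antitone V c hr
  · filter_upwards [Ioc_mem_nhdsLE hR] with r hr
    exact lambdaV_closedBall_le_contractionFactor_mul hloc hpos hr.1 hr.2 le_rfl

theorem continuousOn_lambdaV_closedBall {V : ℝ → ℝ} (hloc : LocallyIntegrable V)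
    (hpos : ∀ᵐ x, 0 ≤ V x) (c : ℝ) :
    ContinuousOn (fun R ↦ lambdaV V (Metric.closedBall c R)) (Ioi 0) := fun _ hR ↦
  (continuousAt_iff_continuous_left_right.2
    ⟨continuousWithinAt_lambdaV_closedBall_Iic hloc hpos c hR,
      continuousWithinAt_lambdaV_closedBall_Ici hloc hpos c hR⟩).continuousWithinAt

theorem lambda_ball_antitone_lsc_general (V : ℝ → ℝ)
    (hloc : LocallyIntegrable V) (hpos : ∀ᵐ x ∂(volume : Measure ℝ), 0 ≤ V x) (x₀ : ℝ) :
    AntitoneOn (fun R : ℝ ↦ lambdaV V (Icc (x₀ - R) (x₀ + R))) (Ioi 0) ∧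
    ContinuousOn (fun R : ℝ ↦ lambdaV V (Icc (x₀ - R) (x₀ + R))) (Ioi 0) ∧
    (∀ R : ℝ, 0 < R → lambdaV V (Icc (x₀ - R) (x₀ + R)) ≠ ⊤) ∧
    Tendsto (fun R : ℝ ↦ lambdaV V (Icc (x₀ - R) (x₀ + R))) (𝓝[>] 0) (𝓝 ⊤) ∧
    (⨅ R : {R : ℝ // 0 < R}, lambdaV V (Icc (x₀ - R.1) (x₀ + R.1))) = lambdaV V univ ∧
    Tendsto (fun R : ℝ ↦ lambdaV V (Icc (x₀ - R) (x₀ + R))) atTop (𝓝 (lambdaV V univ)) := by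
  simp only [← Real.closedBall_eq_Icc]
  exact ⟨(lambdaV_closedBall_antitone V x₀).antitoneOn _,
    continuousOn_lambdaV_closedBall hloc hpos x₀,
    fun _ hR ↦ lambdaV_ne_top_of_mem_nhds V (Metric.closedBall_mem_nhds x₀ hR),
    tendsto_lambdaV_closedBall_nhdsGT_zero hloc hpos x₀,
    iInf_pos_lambdaV_closedBall V x₀,
    tendsto_lambdaV_closedBall_atTop V x₀⟩

/-- **Lemma 3.2 for `G = H = ℝ`.** The map `R ↦ λ_V([x₀ - R, x₀ + R])` is monotonically
nonincreasing, lower semicontinuous and finite on `(0,∞)`; it diverges to `+∞` as `R → 0⁺`,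
and its infimum over `R > 0`, equivalently its limit as `R → ∞`, equals `λ_V(ℝ)`. -/
theorem lambda_ball_antitone_lsc (V : ℝ → ℝ) (hmeas : Measurable V)
    (hloc : LocallyIntegrable V) (hpos : ∀ᵐ x ∂(volume : Measure ℝ), 0 ≤ V x) (x₀ : ℝ) :
    AntitoneOn (fun R : ℝ => lambdaV V (Set.Icc (x₀ - R) (x₀ + R))) (Set.Ioi 0) ∧
    LowerSemicontinuousOn (fun R : ℝ => lambdaV V (Set.Icc (x₀ - R) (x₀ + R))) (Set.Ioi 0) ∧
    (∀ R : ℝ, 0 < R → lambdaV V (Set.Icc (x₀ - R) (x₀ + R)) ≠ ⊤) ∧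
    Tendsto (fun R : ℝ => lambdaV V (Set.Icc (x₀ - R) (x₀ + R))) (𝓝[>] 0) (𝓝 ⊤) ∧
    (⨅ R : {R : ℝ // 0 < R}, lambdaV V (Set.Icc (x₀ - R.1) (x₀ + R.1)))
      = lambdaV V Set.univ ∧
    Tendsto (fun R : ℝ => lambdaV V (Set.Icc (x₀ - R) (x₀ + R))) atTop
      (𝓝 (lambdaV V Set.univ)) := by
  obtain ⟨hanti, hcont, hrest⟩ := lambda_ball_antitone_lsc_general V hloc hpos x₀
  exact ⟨hanti, hcont.lowerSemicontinuousOn, hrest⟩
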